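/- Theorem 1: Under Assumption A, the combined importance-sampling/control-variate estimator T'(Y) = T(Y) − (Z(Y) − P(γ)) (i.e. β = −1) has asymptotically vanishing relative error: limsup_{γ → 0} var_g[T'(Y)] / α(γ)² = 0. In particular, var_g[T'] / α² ≤ C₄ γ^{a_{i₀}/2} (log(1/γ))^{3/2} + o(1) as γ → 0 for some constant C₄. -/

import Mathlib

open MeasureTheory Matrix Real Filter

noncomputable def mvnPdf {n : ℕ} (m : Fin n → ℝ) (S : Matrix (Fin n) (Fin n) ℝ)
    (y : Fin n → ℝ) : ℝ :=
  Real.exp (-(1/2) * ((y - m) ⬝ᵥ S⁻¹.mulVec (y - m))) / Real.sqrt ((2 * Real.pi) ^ n * S.det)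

noncomputable def stdNormCDF (x : ℝ) : ℝ :=
  ∫ t in Set.Iic x, Real.exp (-t ^ 2 / 2) / Real.sqrt (2 * Real.pi)

/-!
Under `g` the vector `Y` is a fixed Gaussian vector `X` plus a deterministic translation. With
`s = mₖ - log γ`, where `k` is the dominant index, this turns the two events into
`{∑ i, exp (X i - a i * s) ≤ 1} ⊆ {X k ≤ 0}` (here `a k = 0`) and the likelihood ratio into a
constant times `exp (s * X k / S k k)`, which is at most `1` on `{X k ≤ 0}`.

Since `T - Z` lives on the difference of the events, its variance is at most the probability of
that difference. There either `X k` lies within `exp (-θ * s)` of `0`, or some other `X i`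
exceeds a positive multiple of `s`; for `θ < min a i` both have probability `O(exp (-θ * s))`. The
strip `-2 / s ≤ X k ≤ -1 / s`, on which the likelihood ratio is bounded below, shows that `α` is at
least of order `1 / s` in the same normalization. Hence the relative variance is `O(γ ^ θ)` for
every `θ < min a i`, in particular for half of the minimal exponent.
-/

open ProbabilityTheory Asymptotics Topology WithLp
open scoped NNReal ENNReal RealInnerProductSpace MatrixOrder

section GaussianDensity

lemma map_withDensity_comp {α β : Type*} [MeasurableSpace α] [MeasurableSpace β] {ν : Measure α}
    {f : α → β} {p : β → ℝ≥0∞} (hf : Measurable f) (hp : Measurable p) :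
    (ν.withDensity (p ∘ f)).map f = (ν.map f).withDensity p := by
  ext s hs
  rw [Measure.map_apply hf hs, withDensity_apply _ (hf hs), withDensity_apply _ hs,
    setLIntegral_map hs hp hf, Function.comp_def]

lemma stdGaussian_eq_withDensity (E : Type*) [NormedAddCommGroup E] [InnerProductSpace ℝ E]
    [FiniteDimensional ℝ E] [MeasurableSpace E] [BorelSpace E] :
    stdGaussian E = volume.withDensity fun x =>
      ENNReal.ofReal (Real.exp (-‖x‖ ^ 2 / 2) / √((2 * π) ^ Module.finrank ℝ E)) := by
  have hint : Integrable fun x : E =>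
      Real.exp (-‖x‖ ^ 2 / 2) / √((2 * π) ^ Module.finrank ℝ E) := by
    have := (GaussianFourier.integrable_cexp_neg_mul_sq_norm_add (b := 1 / 2) (by norm_num) 0
      (0 : E)).norm.div_const (√((2 * π) ^ Module.finrank ℝ E))
    simpa [Complex.norm_exp, ← Complex.ofReal_pow, neg_div, div_eq_inv_mul] using this
  have := isFiniteMeasure_withDensity_ofReal hint.hasFiniteIntegral
  refine Measure.ext_of_charFun (funext fun t => ?_)
  rw [charFun_stdGaussian, charFun_apply, integral_withDensity_eq_integral_toReal_smul
    (by fun_prop) (.of_forall fun _ => ENNReal.ofReal_lt_top)]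
  have hnorm : (√((2 * π) ^ Module.finrank ℝ E) : ℂ) =
      (π / (1 / 2)) ^ (Module.finrank ℝ E / 2 : ℂ) := by
    rw [Real.sqrt_eq_rpow, ← Real.rpow_natCast_mul (by positivity),
      Complex.ofReal_cpow (by positivity)]
    push_cast
    ring_nf
  calc Complex.exp (-‖t‖ ^ 2 / 2)
      = (∫ x : E, Complex.exp (-(1 / 2) * ‖x‖ ^ 2 + Complex.I * ⟪t, x⟫)) /
          √((2 * π) ^ Module.finrank ℝ E) := by
        rw [GaussianFourier.integral_cexp_neg_mul_sq_norm_add (by norm_num), ← hnorm,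
          mul_div_cancel_left₀ _ (by norm_cast; positivity), Complex.I_sq]
        ring_nf
    _ = _ := by
        rw [← integral_div]
        refine integral_congr_ae (.of_forall fun x => ?_)
        dsimp only
        rw [ENNReal.toReal_ofReal (by positivity), Complex.real_smul, Complex.ofReal_div,
          Complex.ofReal_exp, div_mul_eq_mul_div, ← Complex.exp_add, real_inner_comm]
        push_cast
        ring_nf

lemma mvnPdf_add_mulVec {n : ℕ} (m : Fin n → ℝ) {R : Matrix (Fin n) (Fin n) ℝ}
    (hR : R.det ≠ 0) (x : Fin n → ℝ) :
    mvnPdf m (R * Rᵀ) (m + R *ᵥ x) =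
      |R.det|⁻¹ * (Real.exp (-(x ⬝ᵥ x) / 2) / √((2 * π) ^ n)) := by
  have hquad : (R *ᵥ x) ⬝ᵥ (R * Rᵀ)⁻¹ *ᵥ (R *ᵥ x) = x ⬝ᵥ x := by
    have hcancel : (R * Rᵀ)⁻¹ *ᵥ (R *ᵥ x) = (R⁻¹)ᵀ *ᵥ x := by
      rw [mulVec_mulVec, Matrix.mul_inv_rev, Matrix.mul_assoc, nonsing_inv_mul _ hR.isUnit,
        Matrix.mul_one, transpose_nonsing_inv]
    rw [hcancel, mulVec_transpose, dotProduct_comm, ← dotProduct_mulVec, mulVec_mulVec,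
      nonsing_inv_mul _ hR.isUnit, one_mulVec]
  rw [mvnPdf, add_sub_cancel_left, hquad, det_mul, det_transpose, Real.sqrt_mul (by positivity),
    Real.sqrt_mul_self_eq_abs]
  field_simp

lemma map_toEuclideanCLM_volume {ι : Type*} [Fintype ι] [DecidableEq ι] {R : Matrix ι ι ℝ}
    (hR : R.det ≠ 0) :
    (volume : Measure (EuclideanSpace ℝ ι)).map (toEuclideanCLM (𝕜 := ℝ) R) =
      ENNReal.ofReal |R.det|⁻¹ • volume := by
  have hdet : LinearMap.det (toEuclideanCLM (𝕜 := ℝ) R : EuclideanSpace ℝ ι →ₗ[ℝ] _) = R.det := by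
    rw [coe_toEuclideanCLM_eq_toEuclideanLin, toEuclideanLin_eq_toLin_orthonormal,
      LinearMap.det_toLin]
  have := Measure.map_linearMap_addHaar_eq_smul_addHaar volume (hdet ▸ hR)
  rwa [hdet, abs_inv] at this

lemma continuous_mvnPdf {n : ℕ} (m : Fin n → ℝ) (S : Matrix (Fin n) (Fin n) ℝ) :
    Continuous (mvnPdf m S) := by
  unfold mvnPdf
  fun_prop

lemma mvnPdf_pos {n : ℕ} (m : Fin n → ℝ) {S : Matrix (Fin n) (Fin n) ℝ} (hS : S.PosDef)
    (y : Fin n → ℝ) : 0 < mvnPdf m S y :=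
  div_pos (Real.exp_pos _) (Real.sqrt_pos.mpr (mul_pos (by positivity) hS.det_pos))

theorem multivariateGaussian_eq_withDensity {n : ℕ} (m : Fin n → ℝ)
    {S : Matrix (Fin n) (Fin n) ℝ} (hS : S.PosDef) :
    multivariateGaussian (toLp 2 m) S =
      volume.withDensity fun x => ENNReal.ofReal (mvnPdf m S (ofLp x)) := by
  set R := CFC.sqrt S
  have hRR : R * R = S := CFC.sqrt_mul_sqrt_self S hS.posSemidef.nonneg
  have hRT : Rᵀ = R := by
    rw [← conjTranspose_eq_transpose_of_trivial]
    exact (CFC.sqrt_nonneg S).isSelfAdjoint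
  have hR : R.det ≠ 0 := left_ne_zero_of_mul (det_mul R R ▸ hRR ▸ hS.det_pos.ne')
  have hS' : S = R * Rᵀ := by rw [hRT, hRR]
  set Φ : EuclideanSpace ℝ (Fin n) → EuclideanSpace ℝ (Fin n) :=
    fun x => toLp 2 m + toEuclideanCLM (𝕜 := ℝ) R x
  have hvol : (volume : Measure (EuclideanSpace ℝ (Fin n))).map Φ =
      ENNReal.ofReal |R.det|⁻¹ • volume := by
    rw [show Φ = (toLp 2 m + ·) ∘ toEuclideanCLM (𝕜 := ℝ) R from rfl,
      ← Measure.map_map (by fun_prop) (by fun_prop), map_toEuclideanCLM_volume hR,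
      Measure.map_smul, map_add_left_eq_self]
  set p : EuclideanSpace ℝ (Fin n) → ℝ≥0∞ := fun x => ENNReal.ofReal (mvnPdf m S (ofLp x))
  have hp : Measurable p := by
    have := continuous_mvnPdf m S
    fun_prop
  have hpdf : (fun x : EuclideanSpace ℝ (Fin n) =>
      ENNReal.ofReal (Real.exp (-‖x‖ ^ 2 / 2) /
        √((2 * π) ^ Module.finrank ℝ (EuclideanSpace ℝ (Fin n))))) =
      (ENNReal.ofReal |R.det| • p) ∘ Φ := by
    ext x
    have hΦ : p (Φ x) = ENNReal.ofReal (mvnPdf m S (m + R *ᵥ ofLp x)) := rfl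
    rw [Function.comp_apply, Pi.smul_apply, smul_eq_mul, hΦ, hS', mvnPdf_add_mulVec m hR,
      ← ENNReal.ofReal_mul (abs_nonneg _), mul_inv_cancel_left₀ (abs_ne_zero.mpr hR),
      finrank_euclideanSpace_fin, EuclideanSpace.real_norm_sq_eq, dotProduct]
    simp only [pow_two]
  rw [multivariateGaussian, stdGaussian_eq_withDensity, hpdf,
    map_withDensity_comp (by fun_prop) (hp.const_smul _), hvol, withDensity_smul_measure,
    withDensity_smul _ hp, smul_smul, ← ENNReal.ofReal_mul (by positivity),
    inv_mul_cancel₀ (abs_ne_zero.mpr hR), ENNReal.ofReal_one, one_smul]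

lemma integral_mul_mvnPdf {n : ℕ} (m v : Fin n → ℝ) {S : Matrix (Fin n) (Fin n) ℝ}
    (hS : S.PosDef) (F : (Fin n → ℝ) → ℝ) :
    ∫ y, F y * mvnPdf (m + v) S y =
      ∫ x, F (ofLp x + v) ∂multivariateGaussian (toLp 2 m) S := by
  have hcont := continuous_mvnPdf m S
  calc ∫ y, F y * mvnPdf (m + v) S y
      = ∫ z, F (z + v) * mvnPdf m S z := by
        rw [← integral_add_right_eq_self _ v]
        simp only [mvnPdf, add_sub_add_right_eq_sub]
    _ = ∫ x : EuclideanSpace ℝ (Fin n), F (ofLp x + v) * mvnPdf m S (ofLp x) :=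
        ((EuclideanSpace.volume_preserving_symm_measurableEquiv_toLp (Fin n)).integral_comp'
          fun z => F (z + v) * mvnPdf m S z).symm
    _ = ∫ x, F (ofLp x + v) ∂multivariateGaussian (toLp 2 m) S := by
        rw [multivariateGaussian_eq_withDensity m hS, integral_withDensity_eq_integral_toReal_smul
          (by fun_prop) (.of_forall fun _ => ENNReal.ofReal_lt_top)]
        simp only [ENNReal.toReal_ofReal (mvnPdf_pos m hS _).le, smul_eq_mul, mul_comm]

lemma mvnPdf_div_mvnPdf_add_smul_col {n : ℕ} (m : Fin n → ℝ) {S : Matrix (Fin n) (Fin n) ℝ}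
    (hS : S.PosDef) (k : Fin n) (r : ℝ) (y : Fin n → ℝ) :
    mvnPdf m S y / mvnPdf (m + r • S.col k) S y =
      Real.exp (-(r * (y k - m k)) + r ^ 2 * S k k / 2) := by
  have hcol : S⁻¹ *ᵥ (r • S.col k) = Pi.single k r := by
    rw [← mulVec_single_one, ← mulVec_smul, mulVec_mulVec, nonsing_inv_mul _ hS.det_pos.ne'.isUnit,
      one_mulVec, ← Pi.single_smul, smul_eq_mul, mul_one]
  have hsymm : (S⁻¹)ᵀ = S⁻¹ := by
    simpa [IsHermitian, conjTranspose_eq_transpose_of_trivial] using hS.inv.isHermitian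
  have hquad : (y - m - r • S.col k) ⬝ᵥ S⁻¹ *ᵥ (y - m - r • S.col k) =
      (y - m) ⬝ᵥ S⁻¹ *ᵥ (y - m) - 2 * (r * (y k - m k)) + r ^ 2 * S k k := by
    have hcross : (r • S.col k) ⬝ᵥ S⁻¹ *ᵥ (y - m) = (y - m) k * r := by
      rw [dotProduct_mulVec, ← mulVec_transpose, hsymm, hcol, single_dotProduct, mul_comm]
    rw [mulVec_sub, sub_dotProduct, dotProduct_sub, dotProduct_sub, hcol, hcross,
      dotProduct_single, dotProduct_single, Pi.smul_apply, col_apply, smul_eq_mul, Pi.sub_apply]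
    ring
  rw [div_eq_iff (mvnPdf_pos _ hS _).ne', mvnPdf, mvnPdf, ← sub_sub, hquad, ← mul_div_assoc,
    ← Real.exp_add]
  ring_nf

end GaussianDensity

section GaussianIntervals

variable {v : ℝ≥0}

lemma gaussianReal_real_Icc_le (μ : ℝ) (hv : v ≠ 0) {a b : ℝ} (hab : a ≤ b) :
    (gaussianReal μ v).real (Set.Icc a b) ≤ (√(2 * π * v))⁻¹ * (b - a) := by
  rw [measureReal_def, gaussianReal_apply_eq_integral μ hv,
    ENNReal.toReal_ofReal (integral_nonneg (gaussianPDFReal_nonneg μ v))]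
  calc ∫ x in Set.Icc a b, gaussianPDFReal μ v x
      ≤ ∫ _x in Set.Icc a b, (√(2 * π * v))⁻¹ := by
        refine setIntegral_mono_on (integrable_gaussianPDFReal μ v).integrableOn
          (integrableOn_const (by simp)) measurableSet_Icc fun x _ => ?_
        refine mul_le_of_le_one_right (by positivity) (Real.exp_le_one_iff.mpr ?_)
        exact div_nonpos_of_nonpos_of_nonneg (neg_nonpos.mpr (sq_nonneg _)) (by positivity)
    _ = (√(2 * π * v))⁻¹ * (b - a) := by
        rw [setIntegral_const, Real.volume_real_Icc_of_le hab, smul_eq_mul, mul_comm]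

lemma le_gaussianReal_real_Icc (μ : ℝ) (hv : v ≠ 0) {a b r : ℝ} (hab : a ≤ b)
    (ha : μ - r ≤ a) (hb : b ≤ μ + r) :
    gaussianPDFReal μ v (μ + r) * (b - a) ≤ (gaussianReal μ v).real (Set.Icc a b) := by
  rw [measureReal_def, gaussianReal_apply_eq_integral μ hv,
    ENNReal.toReal_ofReal (integral_nonneg (gaussianPDFReal_nonneg μ v)),
    ← Real.volume_real_Icc_of_le hab]
  refine setIntegral_ge_of_const_le_real measurableSet_Icc (by simp) (fun x hx => ?_)
    (integrable_gaussianPDFReal μ v).integrableOn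
  simp only [gaussianPDFReal, add_sub_cancel_left]
  gcongr ?_ * Real.exp (-?_ / _)
  exact sq_le_sq' (by linarith [hx.1]) (by linarith [hx.2])

lemma isBigO_gaussianReal_Icc_neg_zero (μ : ℝ) (hv : v ≠ 0) :
    (fun δ => (gaussianReal μ v).real (Set.Icc (-δ) 0)) =O[𝓝[>] 0] fun δ => δ := by
  refine .of_bound (√(2 * π * v))⁻¹ ?_
  filter_upwards [self_mem_nhdsWithin] with δ (hδ : 0 < δ)
  rw [Real.norm_of_nonneg measureReal_nonneg, Real.norm_of_nonneg hδ.le]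
  simpa using gaussianReal_real_Icc_le μ hv (neg_nonpos.mpr hδ.le)

lemma isBigO_gaussianReal_Icc_neg_two_mul_neg (μ : ℝ) (hv : v ≠ 0) :
    (fun δ => δ) =O[𝓝[>] 0] fun δ => (gaussianReal μ v).real (Set.Icc (-2 * δ) (-δ)) := by
  set p := gaussianPDFReal μ v (μ + (2 + |μ|))
  refine .of_bound p⁻¹ ?_
  filter_upwards [Ioc_mem_nhdsGT one_pos] with δ ⟨hδ0, hδ1⟩
  rw [Real.norm_of_nonneg measureReal_nonneg, Real.norm_of_nonneg hδ0.le, ← div_eq_inv_mul,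
    le_div_iff₀' (gaussianPDFReal_pos μ v _ hv)]
  calc p * δ = p * (-δ - -2 * δ) := by ring
    _ ≤ _ := le_gaussianReal_real_Icc μ hv (by linarith) (by linarith [le_abs_self μ])
        (by linarith [neg_abs_le μ])

lemma isBigO_gaussianReal_Ici (μ : ℝ) (v : ℝ≥0) (K : ℝ) :
    (fun r => (gaussianReal μ v).real (Set.Ici r)) =O[atTop] fun r => Real.exp (-(K * r)) := by
  refine IsBigO.trans (.of_bound (mgf id (gaussianReal μ v) |K|) (.of_forall fun r => ?_))
    (g := fun r => Real.exp (-(|K| * r))) (.of_bound' ?_)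
  · rw [Real.norm_of_nonneg measureReal_nonneg, Real.norm_of_nonneg (Real.exp_pos _).le, mul_comm,
      ← neg_mul]
    exact measure_ge_le_exp_mul_mgf r (abs_nonneg K) (integrable_exp_mul_gaussianReal |K|)
  · filter_upwards [eventually_ge_atTop 0] with r hr
    rw [Real.norm_of_nonneg (Real.exp_pos _).le, Real.norm_of_nonneg (Real.exp_pos _).le]
    gcongr
    exact le_abs_self K

end GaussianIntervals

section TailAsymptotics

variable {Ω ι : Type*} [Fintype ι] {X : ι → Ω → ℝ} {a : ι → ℝ} {k : ι}

/-- The event `∑ i, exp (X i) * u ^ a i ≤ 1`, written with `u = exp (-s)`. -/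
def expSumLeOne (X : ι → Ω → ℝ) (a : ι → ℝ) (s : ℝ) : Set Ω :=
  {ω | ∑ i, Real.exp (X i ω - a i * s) ≤ 1}

lemma measurableSet_expSumLeOne [MeasurableSpace Ω] (hX : ∀ i, Measurable (X i)) (a : ι → ℝ)
    (s : ℝ) : MeasurableSet (expSumLeOne X a s) :=
  measurableSet_le (by fun_prop) measurable_const

lemma expSumLeOne_subset_nonpos (hk : a k = 0) (s : ℝ) :
    expSumLeOne X a s ⊆ {ω | X k ω ≤ 0} := fun ω hω => by
  have := (Finset.single_le_sum (fun i _ => (Real.exp_pos (X i ω - a i * s)).le)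
    (Finset.mem_univ k)).trans hω
  simpa [hk] using this

lemma exp_neg_le_one_sub_half {x : ℝ} (h0 : 0 ≤ x) (h1 : x ≤ 1) : Real.exp (-x) ≤ 1 - x / 2 := by
  calc Real.exp (-x) ≤ (1 + x)⁻¹ := by
        rw [Real.exp_neg]
        exact inv_anti₀ (by positivity) (by linarith [Real.add_one_le_exp x])
    _ ≤ 1 - x / 2 := (inv_le_iff_one_le_mul₀' (by positivity)).mpr (by nlinarith)

lemma nonpos_sdiff_expSumLeOne_subset [DecidableEq ι] (hk : a k = 0) (s : ℝ) {t : ℝ}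
    (ht : 0 ≤ t) :
    {ω | X k ω ≤ 0} \ expSumLeOne X a s ⊆
      X k ⁻¹' Set.Icc (-Real.exp (-t)) 0 ∪
        ⋃ i ∈ Finset.univ.erase k,
          X i ⁻¹' Set.Ici (a i * s - t - Real.log (2 * Fintype.card ι)) := by
  rintro ω ⟨hω0, hωE⟩
  by_contra! hω
  simp only [Set.mem_union, Set.mem_iUnion, Set.mem_preimage, Set.mem_Icc, Set.mem_Ici, not_or,
    not_and, not_exists, not_le, Finset.mem_erase, Finset.mem_univ, and_true] at hω
  obtain ⟨hωk, hωi⟩ := hω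
  set δ := Real.exp (-t)
  have hcard : (0 : ℝ) < Fintype.card ι := Nat.cast_pos.mpr (Fintype.card_pos_iff.mpr ⟨k⟩)
  have hδ : δ ≤ 1 := Real.exp_le_one_iff.mpr (neg_nonpos.mpr ht)
  have hmain : Real.exp (X k ω - a k * s) ≤ 1 - δ / 2 := by
    refine (Real.exp_le_exp.mpr ?_).trans (exp_neg_le_one_sub_half (Real.exp_pos _).le hδ)
    rw [hk, zero_mul, sub_zero]
    exact not_lt.mp fun h => (hωk h.le).not_ge hω0
  have hother (i : ι) (hi : i ≠ k) :
      Real.exp (X i ω - a i * s) ≤ δ / (2 * Fintype.card ι) := by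
    rw [← Real.exp_log (mul_pos two_pos hcard), ← Real.exp_sub]
    exact Real.exp_le_exp.mpr (by linarith [hωi i hi])
  refine hωE ?_
  calc ∑ i, Real.exp (X i ω - a i * s)
      = Real.exp (X k ω - a k * s) + ∑ i ∈ Finset.univ.erase k, Real.exp (X i ω - a i * s) :=
        (Finset.add_sum_erase _ _ (Finset.mem_univ k)).symm
    _ ≤ (1 - δ / 2) + ∑ i ∈ Finset.univ.erase k, δ / (2 * Fintype.card ι) :=
        add_le_add hmain (Finset.sum_le_sum fun i hi => hother i (Finset.ne_of_mem_erase hi))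
    _ ≤ (1 - δ / 2) + ∑ _i : ι, δ / (2 * Fintype.card ι) := by
        gcongr
        exact Finset.subset_univ _
    _ = 1 := by
        rw [Finset.sum_const, Finset.card_univ, nsmul_eq_mul]
        field_simp
        ring

variable [MeasurableSpace Ω] {ν : Measure Ω} {θ : ℝ}

lemma isBigO_measureReal_Ici_linear {Y : Ω → ℝ} {b : ℝ}
    (hT : ∀ K, (fun r => ν.real (Y ⁻¹' Set.Ici r)) =O[atTop] fun r => Real.exp (-(K * r)))
    (hθ : θ < b) (c : ℝ) :
    (fun s => ν.real (Y ⁻¹' Set.Ici (b * s - θ * s - c))) =O[atTop]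
      fun s => Real.exp (-(θ * s)) := by
  have hb : 0 < b - θ := sub_pos.mpr hθ
  have hlim : Tendsto (fun s => b * s - θ * s - c) atTop atTop := by
    simp only [← sub_mul]
    exact tendsto_atTop_add_const_right _ _ (tendsto_id.const_mul_atTop hb)
  refine ((hT (θ / (b - θ))).comp_tendsto hlim).trans ?_
  have hexp (s : ℝ) : Real.exp (-(θ / (b - θ) * (b * s - θ * s - c))) =
      Real.exp (θ / (b - θ) * c) * Real.exp (-(θ * s)) := by
    rw [← Real.exp_add]
    congr 1
    field_simp
    ring
  simp only [Function.comp_def, hexp]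
  exact isBigO_const_mul_self _ _ _

theorem isBigO_measureReal_nonpos_sdiff_expSumLeOne [IsFiniteMeasure ν] (hk : a k = 0)
    (hI : (fun δ => ν.real (X k ⁻¹' Set.Icc (-δ) 0)) =O[𝓝[>] 0] fun δ => δ)
    (hT : ∀ i ≠ k, ∀ K,
      (fun r => ν.real (X i ⁻¹' Set.Ici r)) =O[atTop] fun r => Real.exp (-(K * r)))
    (hθ0 : 0 < θ) (hθ : ∀ i ≠ k, θ < a i) :
    (fun s => ν.real ({ω | X k ω ≤ 0} \ expSumLeOne X a s)) =O[atTop]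
      fun s => Real.exp (-(θ * s)) := by
  classical
  have hexp : Tendsto (fun s => Real.exp (-(θ * s))) atTop (𝓝[>] 0) :=
    Real.tendsto_exp_atBot_nhdsGT.comp
      (tendsto_neg_atTop_atBot.comp (tendsto_id.const_mul_atTop hθ0))
  have hnear := hI.comp_tendsto hexp
  have hfar : (fun s => ∑ i ∈ Finset.univ.erase k,
      ν.real (X i ⁻¹' Set.Ici (a i * s - θ * s - Real.log (2 * Fintype.card ι)))) =O[atTop]
        fun s => Real.exp (-(θ * s)) :=
    IsBigO.fun_sum fun i hi => isBigO_measureReal_Ici_linear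
      (hT i (Finset.ne_of_mem_erase hi)) (hθ i (Finset.ne_of_mem_erase hi)) _
  refine IsBigO.trans (.of_bound' ?_) (hnear.add hfar)
  filter_upwards [eventually_ge_atTop 0] with s hs
  rw [Real.norm_of_nonneg measureReal_nonneg]
  refine le_trans ?_ (le_abs_self _)
  calc _ ≤ _ := measureReal_mono
        (nonpos_sdiff_expSumLeOne_subset hk s (mul_nonneg hθ0.le hs))
    _ ≤ _ := measureReal_union_le _ _
    _ ≤ _ := add_le_add_right (measureReal_biUnion_finset_le _ _) _

lemma isLittleO_exp_neg_mul_inv (hθ0 : 0 < θ) :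
    (fun s => Real.exp (-(θ * s))) =o[atTop] fun s : ℝ => s⁻¹ := by
  have := isLittleO_exp_neg_mul_rpow_atTop hθ0 (-1)
  simpa [Real.rpow_neg_one] using this

theorem isBigO_inv_measureReal_expSumLeOne_inter_Icc [IsFiniteMeasure ν]
    (hX : ∀ i, Measurable (X i))
    (hL : (fun δ => δ) =O[𝓝[>] 0] fun δ => ν.real (X k ⁻¹' Set.Icc (-2 * δ) (-δ)))
    (hθ0 : 0 < θ)
    (hp : (fun s => ν.real ({ω | X k ω ≤ 0} \ expSumLeOne X a s)) =O[atTop]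
      fun s => Real.exp (-(θ * s))) :
    (fun s : ℝ => s⁻¹) =O[atTop]
      fun s => ν.real (X k ⁻¹' Set.Icc (-2 * s⁻¹) (-s⁻¹) ∩ expSumLeOne X a s) := by
  set F : ℝ → Set Ω := fun s => X k ⁻¹' Set.Icc (-2 * s⁻¹) (-s⁻¹)
  have hF : (fun s => s⁻¹) =O[atTop] fun s => ν.real (F s) :=
    hL.comp_tendsto tendsto_inv_atTop_nhdsGT_zero
  have hsub : (fun s => ν.real (F s \ expSumLeOne X a s)) =O[atTop]
      fun s => ν.real ({ω | X k ω ≤ 0} \ expSumLeOne X a s) := by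
    refine .of_bound' ?_
    filter_upwards [eventually_ge_atTop 0] with s hs
    rw [Real.norm_of_nonneg measureReal_nonneg, Real.norm_of_nonneg measureReal_nonneg]
    exact measureReal_mono (Set.sdiff_subset_sdiff_left fun ω hω =>
      hω.2.trans (neg_nonpos.mpr (inv_nonneg.mpr hs)))
  have hloss : (fun s => ν.real (F s \ expSumLeOne X a s)) =o[atTop] fun s => ν.real (F s) :=
    ((hsub.trans hp).trans_isLittleO (isLittleO_exp_neg_mul_inv hθ0)).trans_isBigO hF
  refine hF.trans (hloss.right_isBigO_sub.congr_right fun s => ?_)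
  rw [sub_eq_iff_eq_add, measureReal_inter_add_sdiff (measurableSet_expSumLeOne hX a s)]

theorem isBigO_inv_setIntegral_expSumLeOne [IsFiniteMeasure ν] (hX : ∀ i, Measurable (X i))
    (hk : a k = 0)
    (hL : (fun δ => δ) =O[𝓝[>] 0] fun δ => ν.real (X k ⁻¹' Set.Icc (-2 * δ) (-δ)))
    (hθ0 : 0 < θ)
    (hp : (fun s => ν.real ({ω | X k ω ≤ 0} \ expSumLeOne X a s)) =O[atTop]
      fun s => Real.exp (-(θ * s))) {κ : ℝ} (hκ : 0 ≤ κ) :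
    (fun s : ℝ => s⁻¹) =O[atTop]
      fun s => ∫ ω in expSumLeOne X a s, Real.exp (κ * s * X k ω) ∂ν := by
  refine (isBigO_inv_measureReal_expSumLeOne_inter_Icc hX hL hθ0 hp).trans
    (.of_bound (Real.exp (2 * κ)) ?_)
  filter_upwards [eventually_gt_atTop 0] with s hs
  set E := expSumLeOne X a s
  set F := X k ⁻¹' Set.Icc (-2 * s⁻¹) (-s⁻¹)
  have hE : MeasurableSet E := measurableSet_expSumLeOne hX a s
  have hF : MeasurableSet F := hX k measurableSet_Icc
  have hint : IntegrableOn (fun ω => Real.exp (κ * s * X k ω)) E ν := by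
    refine .of_bound (measure_lt_top _ _) (by have := hX k; fun_prop) 1
      (ae_restrict_of_forall_mem hE fun ω hω => ?_)
    rw [Real.norm_of_nonneg (Real.exp_pos _).le, Real.exp_le_one_iff]
    exact mul_nonpos_of_nonneg_of_nonpos (by positivity) (expSumLeOne_subset_nonpos hk s hω)
  have hlow : Real.exp (-(2 * κ)) * ν.real (F ∩ E) ≤ ∫ ω in E, Real.exp (κ * s * X k ω) ∂ν := by
    calc Real.exp (-(2 * κ)) * ν.real (F ∩ E)
        ≤ ∫ ω in F ∩ E, Real.exp (κ * s * X k ω) ∂ν := by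
          refine setIntegral_ge_of_const_le_real (hF.inter hE) (measure_ne_top _ _)
            (fun ω hω => Real.exp_le_exp.mpr ?_) (hint.mono_set Set.inter_subset_right)
          calc -(2 * κ) = κ * s * (-2 * s⁻¹) := by field_simp
            _ ≤ κ * s * X k ω := by
              gcongr
              exact hω.1.1
      _ ≤ ∫ ω in E, Real.exp (κ * s * X k ω) ∂ν :=
          setIntegral_mono_set hint (.of_forall fun ω => (Real.exp_pos _).le)
            (.of_forall Set.inter_subset_right)
  rw [Real.norm_of_nonneg measureReal_nonneg]
  calc ν.real (F ∩ E) = Real.exp (2 * κ) * (Real.exp (-(2 * κ)) * ν.real (F ∩ E)) := by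
        rw [← mul_assoc, ← Real.exp_add, add_neg_cancel, Real.exp_zero, one_mul]
    _ ≤ _ := by
        gcongr
        exact hlow.trans (le_abs_self _)

end TailAsymptotics

/-- The mean square of the centered difference of the estimator `h 1_A` and the control variate
`h 1_B`, i.e. the variance of the controlled estimator with coefficient `-1`. -/
noncomputable def controlledVariance {Ω : Type*} [MeasurableSpace Ω] (ν : Measure Ω)
    (A B : Set Ω) (h : Ω → ℝ) : ℝ :=
  ∫ ω, (A.indicator h ω - B.indicator h ω + ∫ ω in B, h ω ∂ν - ∫ ω in A, h ω ∂ν) ^ 2 ∂ν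

lemma controlledVariance_nonneg {Ω : Type*} [MeasurableSpace Ω] (ν : Measure Ω) (A B : Set Ω)
    (h : Ω → ℝ) : 0 ≤ controlledVariance ν A B h :=
  integral_nonneg fun _ => sq_nonneg _

lemma controlledVariance_const_mul {Ω : Type*} [MeasurableSpace Ω] (ν : Measure Ω) (A B : Set Ω)
    (c : ℝ) (h : Ω → ℝ) :
    controlledVariance ν A B (fun ω => c * h ω) = c ^ 2 * controlledVariance ν A B h := by
  simp only [controlledVariance, integral_const_mul, Set.indicator_const_mul, ← mul_add, ← mul_sub,
    mul_pow]

lemma controlledVariance_eq_variance {Ω : Type*} [MeasurableSpace Ω] {ν : Measure Ω}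
    {A B : Set Ω} (hA : MeasurableSet A) (hB : MeasurableSet B) (hAB : A ⊆ B) {h : Ω → ℝ}
    (hh : Measurable h) (hint : IntegrableOn h B ν) :
    controlledVariance ν A B h = variance ((B \ A).indicator h) ν := by
  rw [variance_eq_integral (hh.indicator (hB.diff hA)).aemeasurable, controlledVariance]
  refine integral_congr_ae (.of_forall fun ω => ?_)
  dsimp only
  rw [integral_indicator (hB.diff hA), setIntegral_sdiff hA hint hAB, Set.indicator_sdiff hAB,
    Pi.sub_apply]
  ring

lemma controlledVariance_le {Ω : Type*} [MeasurableSpace Ω] {ν : Measure Ω}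
    [IsProbabilityMeasure ν] {A B : Set Ω} (hA : MeasurableSet A) (hB : MeasurableSet B)
    (hAB : A ⊆ B) {h : Ω → ℝ} (hh : Measurable h) (h01 : ∀ ω ∈ B, h ω ∈ Set.Icc 0 1) :
    controlledVariance ν A B h ≤ ν.real (B \ A) := by
  have hint : IntegrableOn h B ν :=
    .of_bound (measure_lt_top _ _) hh.aestronglyMeasurable 1
      (ae_restrict_of_forall_mem hB fun ω hω => by
        rw [Real.norm_of_nonneg (h01 ω hω).1]
        exact (h01 ω hω).2)
  have hsq (ω : Ω) : (B \ A).indicator h ω ^ 2 ≤ (B \ A).indicator 1 ω := by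
    by_cases hω : ω ∈ B \ A
    · rw [Set.indicator_of_mem hω, Set.indicator_of_mem hω]
      exact pow_le_one₀ (h01 ω hω.1).1 (h01 ω hω.1).2
    · rw [Set.indicator_of_notMem hω, Set.indicator_of_notMem hω, zero_pow two_ne_zero]
  rw [controlledVariance_eq_variance hA hB hAB hh hint]
  calc variance ((B \ A).indicator h) ν
      ≤ ∫ ω, (B \ A).indicator h ω ^ 2 ∂ν :=
        variance_le_expectation_sq (hh.indicator (hB.diff hA)).aestronglyMeasurable
    _ ≤ ∫ ω, (B \ A).indicator 1 ω ∂ν :=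
        integral_mono_of_nonneg (.of_forall fun ω => sq_nonneg _)
          ((integrable_const 1).indicator (hB.diff hA)) (.of_forall hsq)
    _ = ν.real (B \ A) := integral_indicator_one (hB.diff hA)

theorem isBigO_controlledVariance_div_sq {Ω ι : Type*} [MeasurableSpace Ω] [Fintype ι]
    {ν : Measure Ω} [IsProbabilityMeasure ν] {X : ι → Ω → ℝ} {a : ι → ℝ} {k : ι} {θ κ : ℝ}
    (hX : ∀ i, Measurable (X i)) (hk : a k = 0)
    (hI : (fun δ => ν.real (X k ⁻¹' Set.Icc (-δ) 0)) =O[𝓝[>] 0] fun δ => δ)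
    (hL : (fun δ => δ) =O[𝓝[>] 0] fun δ => ν.real (X k ⁻¹' Set.Icc (-2 * δ) (-δ)))
    (hT : ∀ i ≠ k, ∀ K,
      (fun r => ν.real (X i ⁻¹' Set.Ici r)) =O[atTop] fun r => Real.exp (-(K * r)))
    (hθ0 : 0 < θ) (hθ : ∀ i ≠ k, θ < a i) (hκ : 0 ≤ κ) :
    (fun s => controlledVariance ν (expSumLeOne X a s) {ω | X k ω ≤ 0}
          (fun ω => Real.exp (κ * s * X k ω)) /
        (∫ ω in expSumLeOne X a s, Real.exp (κ * s * X k ω) ∂ν) ^ 2) =O[atTop]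
      fun s => Real.exp (-(θ * s)) := by
  classical
  -- The strict gap `θ < θ'` absorbs the factor `s ^ 2` coming from the denominator.
  obtain ⟨θ', hθ', hθa⟩ : ∃ θ', θ < θ' ∧ ∀ i ≠ k, θ' < a i := by
    simpa using Order.exists_between_finsets {θ} ((Finset.univ.erase k).image a)
      (by simpa using hθ)
  have hp := isBigO_measureReal_nonpos_sdiff_expSumLeOne hk hI hT (hθ0.trans hθ') hθa
  have hvar : (fun s => controlledVariance ν (expSumLeOne X a s) {ω | X k ω ≤ 0}
      (fun ω => Real.exp (κ * s * X k ω))) =O[atTop] fun s => Real.exp (-(θ' * s)) := by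
    refine IsBigO.trans (.of_bound' ?_) hp
    filter_upwards [eventually_ge_atTop 0] with s hs
    rw [Real.norm_of_nonneg measureReal_nonneg,
      Real.norm_of_nonneg (controlledVariance_nonneg _ _ _ _)]
    refine controlledVariance_le (measurableSet_expSumLeOne hX a s)
      (measurableSet_le (hX k) measurable_const) (expSumLeOne_subset_nonpos hk s)
      (by have := hX k; fun_prop) fun ω hω => ⟨(Real.exp_pos _).le, Real.exp_le_one_iff.mpr ?_⟩
    exact mul_nonpos_of_nonneg_of_nonpos (mul_nonneg hκ hs) hω
  have hsq : (fun s => ((∫ ω in expSumLeOne X a s, Real.exp (κ * s * X k ω) ∂ν) ^ 2)⁻¹) =O[atTop]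
      fun s => s ^ 2 := by
    have hα := isBigO_inv_setIntegral_expSumLeOne hX hk hL (hθ0.trans hθ') hp hκ
    refine ((hα.pow 2).inv_rev ?_).congr_right fun s => by rw [inv_pow, inv_inv]
    filter_upwards [eventually_gt_atTop 0] with s hs h0
    exact absurd h0 (by positivity)
  have hpoly : (fun s : ℝ => Real.exp (-(θ' * s)) * s ^ 2) =O[atTop]
      fun s => Real.exp (-(θ * s)) := by
    have := (isBigO_refl (fun s => Real.exp (-(θ' * s))) atTop).mul
      (isLittleO_pow_exp_pos_mul_atTop 2 (sub_pos.mpr hθ')).isBigO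
    refine this.congr_right fun s => ?_
    rw [← Real.exp_add]
    ring_nf
  simp only [div_eq_mul_inv]
  exact (hvar.mul hsq).trans hpoly

section Estimators

variable {n : ℕ} (m : Fin n → ℝ) (S : Matrix (Fin n) (Fin n) ℝ) (k : Fin n)

/-- The mean shift `Λ*` of the importance sampling density, for the dominant index `k`. -/
noncomputable def importanceShift (γ : ℝ) (i : Fin n) : ℝ :=
  if i = k then Real.log γ - m k else S i k / S k k * (Real.log γ - m k)

/-- The likelihood ratio `L = f / g` of the target and the importance sampling density. -/
noncomputable def likelihoodRatio (γ : ℝ) (y : Fin n → ℝ) : ℝ :=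
  mvnPdf m S y / mvnPdf (m + importanceShift m S k γ) S y

/-- The importance sampling estimator `T` of the left tail of `∑ i, exp (Y i)`. -/
noncomputable def sumEstimator (γ : ℝ) (y : Fin n → ℝ) : ℝ :=
  Set.indicator {y : Fin n → ℝ | ∑ i, Real.exp (y i) ≤ γ} (fun _ => (1 : ℝ)) y *
    likelihoodRatio m S k γ y

/-- The control variate `Z`, estimating the left tail of the dominant term `exp (Y k)`. -/
noncomputable def controlVariate (γ : ℝ) (y : Fin n → ℝ) : ℝ :=
  Set.indicator {y : Fin n → ℝ | Real.exp (y k) ≤ γ} (fun _ => (1 : ℝ)) y *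
    likelihoodRatio m S k γ y

/-- The mean `α = E_g[T]`. -/
noncomputable def sumEstimatorMean (γ : ℝ) : ℝ :=
  ∫ y, sumEstimator m S k γ y * mvnPdf (m + importanceShift m S k γ) S y

/-- The mean `P = E_g[Z]`. -/
noncomputable def controlVariateMean (γ : ℝ) : ℝ :=
  ∫ y, controlVariate m S k γ y * mvnPdf (m + importanceShift m S k γ) S y

/-- The variance under `g` of the controlled estimator `T' = T - (Z - P)`, whose mean is `α`. -/
noncomputable def controlledEstimatorVariance (γ : ℝ) : ℝ :=
  ∫ y, (sumEstimator m S k γ y - controlVariate m S k γ y + controlVariateMean m S k γ -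
    sumEstimatorMean m S k γ) ^ 2 * mvnPdf (m + importanceShift m S k γ) S y

/-- The exponents `aᵢ = Σᵢₖ / Σₖₖ - 1`. -/
noncomputable def tailExponent (i : Fin n) : ℝ :=
  S i k / S k k - 1

/-- The translation `i ↦ log γ - aᵢ (mₖ - log γ)` that turns the Gaussian law with the fixed mean
`m - mₖ` into the importance sampling law. -/
noncomputable def recentering (γ : ℝ) (i : Fin n) : ℝ :=
  Real.log γ - tailExponent S k i * (m k - Real.log γ)

/-- The event `∑ i, exp (Y i) ≤ γ` in the recentered coordinates, with `s = mₖ - log γ`. -/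
def recenteredSumEvent (s : ℝ) : Set (EuclideanSpace ℝ (Fin n)) :=
  expSumLeOne (fun i x => x i) (tailExponent S k) s

/-- The Gaussian law with mean `m - mₖ` and covariance `S`. -/
noncomputable def recenteredGaussian : Measure (EuclideanSpace ℝ (Fin n)) :=
  multivariateGaussian (toLp 2 fun i => m i - m k) S

instance : IsProbabilityMeasure (recenteredGaussian m S k) :=
  inferInstanceAs (IsProbabilityMeasure (multivariateGaussian _ _))

variable {S}

lemma measureReal_recenteredGaussian_eval_preimage (hS : S.PosDef) (i : Fin n)
    {s : Set ℝ} (hs : MeasurableSet s) :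
    (recenteredGaussian m S k).real ((fun x : EuclideanSpace ℝ (Fin n) => x i) ⁻¹' s) =
      (gaussianReal (m i - m k) (S i i).toNNReal).real s :=
  (measurePreserving_eval_multivariateGaussian hS.posSemidef).measureReal_preimage
    hs.nullMeasurableSet

lemma tailExponent_self (hS : S.PosDef) : tailExponent S k k = 0 := by
  rw [tailExponent, div_self hS.diag_pos.ne', sub_self]

lemma importanceShift_eq_smul_col (hS : S.PosDef) (γ : ℝ) :
    importanceShift m S k γ = (-(m k - Real.log γ) / S k k) • S.col k := by
  have hk : S k k ≠ 0 := hS.diag_pos.ne'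
  ext i
  rw [importanceShift, Pi.smul_apply, col_apply, smul_eq_mul]
  split_ifs with hi
  · subst hi
    field_simp
    ring
  · field_simp
    ring

lemma add_importanceShift (hS : S.PosDef) (γ : ℝ) :
    m + importanceShift m S k γ = (fun i => m i - m k) + recentering m S k γ := by
  rw [importanceShift_eq_smul_col m k hS]
  have hk : S k k ≠ 0 := hS.diag_pos.ne'
  ext i
  simp only [Pi.add_apply, Pi.smul_apply, col_apply, smul_eq_mul, recentering, tailExponent]
  field_simp
  ring

lemma likelihoodRatio_add_recentering (hS : S.PosDef) (γ : ℝ) (x : Fin n → ℝ) :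
    likelihoodRatio m S k γ (x + recentering m S k γ) =
      Real.exp (-((m k - Real.log γ) ^ 2 / (2 * S k k))) *
        Real.exp ((S k k)⁻¹ * (m k - Real.log γ) * x k) := by
  have hk : S k k ≠ 0 := hS.diag_pos.ne'
  rw [likelihoodRatio, importanceShift_eq_smul_col m k hS, mvnPdf_div_mvnPdf_add_smul_col m hS,
    ← Real.exp_add, Pi.add_apply, recentering, tailExponent_self k hS]
  congr 1
  field_simp
  ring

lemma integral_mul_importanceDensity (hS : S.PosDef) (γ : ℝ) (F : (Fin n → ℝ) → ℝ) :
    ∫ y, F y * mvnPdf (m + importanceShift m S k γ) S y =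
      ∫ x, F (ofLp x + recentering m S k γ) ∂recenteredGaussian m S k := by
  rw [add_importanceShift m k hS, integral_mul_mvnPdf _ _ hS, recenteredGaussian]

lemma sum_exp_add_recentering_le_iff {γ : ℝ} (hγ : 0 < γ) (x : EuclideanSpace ℝ (Fin n)) :
    ∑ i, Real.exp ((ofLp x + recentering m S k γ) i) ≤ γ ↔
      x ∈ recenteredSumEvent S k (m k - Real.log γ) := by
  have hexp (i : Fin n) : Real.exp ((ofLp x + recentering m S k γ) i) =
      γ * Real.exp (x i - tailExponent S k i * (m k - Real.log γ)) := by
    nth_rewrite 2 [← Real.exp_log hγ]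
    rw [← Real.exp_add, Pi.add_apply, recentering]
    ring_nf
  simp only [hexp, ← Finset.mul_sum, mul_le_iff_le_one_right hγ, recenteredSumEvent,
    expSumLeOne, Set.mem_ofPred_eq]

lemma exp_add_recentering_le_iff (hS : S.PosDef) {γ : ℝ} (hγ : 0 < γ) (x : Fin n → ℝ) :
    Real.exp ((x + recentering m S k γ) k) ≤ γ ↔ x k ≤ 0 := by
  rw [← Real.le_log_iff_exp_le hγ, Pi.add_apply, recentering, tailExponent_self k hS]
  simp

lemma sumEstimator_add_recentering {γ : ℝ} (hγ : 0 < γ) (x : EuclideanSpace ℝ (Fin n)) :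
    sumEstimator m S k γ (ofLp x + recentering m S k γ) =
      (recenteredSumEvent S k (m k - Real.log γ)).indicator
        (fun x => likelihoodRatio m S k γ (ofLp x + recentering m S k γ)) x := by
  classical
  rw [sumEstimator, Set.indicator_apply, Set.indicator_apply, ite_mul, one_mul, zero_mul]
  exact if_congr (sum_exp_add_recentering_le_iff m k hγ x) rfl rfl

lemma controlVariate_add_recentering (hS : S.PosDef) {γ : ℝ} (hγ : 0 < γ)
    (x : EuclideanSpace ℝ (Fin n)) :
    controlVariate m S k γ (ofLp x + recentering m S k γ) =
      {x : EuclideanSpace ℝ (Fin n) | x k ≤ 0}.indicator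
        (fun x => likelihoodRatio m S k γ (ofLp x + recentering m S k γ)) x := by
  simp only [controlVariate, Set.indicator_apply, Set.mem_ofPred_eq,
    exp_add_recentering_le_iff m k hS hγ, ite_mul, one_mul, zero_mul]

lemma sumEstimatorMean_eq (hS : S.PosDef) {γ : ℝ} (hγ : 0 < γ) :
    sumEstimatorMean m S k γ =
      ∫ x in recenteredSumEvent S k (m k - Real.log γ),
        likelihoodRatio m S k γ (ofLp x + recentering m S k γ) ∂recenteredGaussian m S k := by
  simp only [sumEstimatorMean, integral_mul_importanceDensity m k hS,
    sumEstimator_add_recentering m k hγ]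
  exact integral_indicator (measurableSet_expSumLeOne (by fun_prop) _ _)

lemma controlVariateMean_eq (hS : S.PosDef) {γ : ℝ} (hγ : 0 < γ) :
    controlVariateMean m S k γ =
      ∫ x in {x : EuclideanSpace ℝ (Fin n) | x k ≤ 0},
        likelihoodRatio m S k γ (ofLp x + recentering m S k γ) ∂recenteredGaussian m S k := by
  simp only [controlVariateMean, integral_mul_importanceDensity m k hS,
    controlVariate_add_recentering m k hS hγ]
  exact integral_indicator (measurableSet_le (by fun_prop) measurable_const)

lemma controlledEstimatorVariance_eq (hS : S.PosDef) {γ : ℝ} (hγ : 0 < γ) :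
    controlledEstimatorVariance m S k γ =
      controlledVariance (recenteredGaussian m S k) (recenteredSumEvent S k (m k - Real.log γ))
        {x | x k ≤ 0} (fun x => likelihoodRatio m S k γ (ofLp x + recentering m S k γ)) := by
  rw [controlledEstimatorVariance, integral_mul_importanceDensity m k hS γ fun y =>
    (sumEstimator m S k γ y - controlVariate m S k γ y + controlVariateMean m S k γ -
      sumEstimatorMean m S k γ) ^ 2]
  simp only [controlledVariance, sumEstimator_add_recentering m k hγ,
    controlVariate_add_recentering m k hS hγ, sumEstimatorMean_eq m k hS hγ,
    controlVariateMean_eq m k hS hγ]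

lemma controlledEstimatorVariance_div_sq (hS : S.PosDef) {γ : ℝ} (hγ : 0 < γ) :
    controlledEstimatorVariance m S k γ / sumEstimatorMean m S k γ ^ 2 =
      controlledVariance (recenteredGaussian m S k) (recenteredSumEvent S k (m k - Real.log γ))
          {x | x k ≤ 0} (fun x => Real.exp ((S k k)⁻¹ * (m k - Real.log γ) * x k)) /
        (∫ x in recenteredSumEvent S k (m k - Real.log γ),
          Real.exp ((S k k)⁻¹ * (m k - Real.log γ) * x k) ∂recenteredGaussian m S k) ^ 2 := by
  rw [controlledEstimatorVariance_eq m k hS hγ, sumEstimatorMean_eq m k hS hγ]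
  simp only [likelihoodRatio_add_recentering m k hS]
  rw [controlledVariance_const_mul, integral_const_mul, mul_pow,
    mul_div_mul_left _ _ (by positivity)]

lemma isBigO_controlledVariance_recenteredGaussian (hS : S.PosDef) {θ : ℝ} (hθ0 : 0 < θ)
    (hθ : ∀ i ≠ k, θ < tailExponent S k i) :
    (fun s => controlledVariance (recenteredGaussian m S k) (recenteredSumEvent S k s)
          {x | x k ≤ 0} (fun x => Real.exp ((S k k)⁻¹ * s * x k)) /
        (∫ x in recenteredSumEvent S k s,
          Real.exp ((S k k)⁻¹ * s * x k) ∂recenteredGaussian m S k) ^ 2) =O[atTop]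
      fun s => Real.exp (-(θ * s)) := by
  have hv : (S k k).toNNReal ≠ 0 := by simpa using hS.diag_pos
  refine isBigO_controlledVariance_div_sq (X := fun i (x : EuclideanSpace ℝ (Fin n)) => x i)
    (by fun_prop) (tailExponent_self k hS) ?_ ?_ (fun i _ K => ?_) hθ0 hθ
    (inv_nonneg.mpr hS.diag_pos.le)
  · simp only [measureReal_recenteredGaussian_eval_preimage m k hS _ measurableSet_Icc]
    exact isBigO_gaussianReal_Icc_neg_zero _ hv
  · simp only [measureReal_recenteredGaussian_eval_preimage m k hS _ measurableSet_Icc]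
    exact isBigO_gaussianReal_Icc_neg_two_mul_neg _ hv
  · simp only [measureReal_recenteredGaussian_eval_preimage m k hS _ measurableSet_Ici]
    exact isBigO_gaussianReal_Ici _ _ K

theorem isBigO_controlledEstimatorVariance_div_sq (hS : S.PosDef) {θ : ℝ} (hθ0 : 0 < θ)
    (hθ : ∀ i ≠ k, θ < tailExponent S k i) :
    (fun γ => controlledEstimatorVariance m S k γ / sumEstimatorMean m S k γ ^ 2) =O[𝓝[>] 0]
      fun γ => γ ^ θ := by
  have hlim : Tendsto (fun γ => m k - Real.log γ) (𝓝[>] 0) atTop :=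
    tendsto_atTop_add_const_left _ _ (tendsto_neg_atBot_atTop.comp Real.tendsto_log_nhdsGT_zero)
  refine (((isBigO_controlledVariance_recenteredGaussian m k hS hθ0 hθ).comp_tendsto hlim).congr'
    ?_ ?_).trans (isBigO_const_mul_self (Real.exp (-(θ * m k))) _ _)
  · filter_upwards [self_mem_nhdsWithin] with γ (hγ : 0 < γ)
    exact (controlledEstimatorVariance_div_sq m k hS hγ).symm
  · filter_upwards [self_mem_nhdsWithin] with γ (hγ : 0 < γ)
    rw [Function.comp_apply, Real.rpow_def_of_pos hγ, ← Real.exp_add]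
    ring_nf

end Estimators

lemma tailExponent_pos {n : ℕ} {S : Matrix (Fin n) (Fin n) ℝ} (hS : S.PosDef) {k j : Fin n}
    (h : √(S k k) < S k j / √(S k k * S j j) * √(S j j)) : 0 < tailExponent S k j := by
  have hk : 0 < √(S k k) := Real.sqrt_pos.mpr hS.diag_pos
  have hj : 0 < √(S j j) := Real.sqrt_pos.mpr hS.diag_pos
  rw [Real.sqrt_mul hS.diag_pos.le, ← div_div, div_mul_cancel₀ _ hj.ne', lt_div_iff₀ hk,
    Real.mul_self_sqrt hS.diag_pos.le] at h
  rw [tailExponent, sub_pos, one_lt_div hS.diag_pos]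
  simpa using h.trans_eq (hS.isHermitian.apply j k)

lemma le_of_eventually_const_mul_rpow_le {a b c d : ℝ} (hc : 0 < c)
    (h : ∀ᶠ γ in 𝓝[>] (0 : ℝ), c * γ ^ a ≤ d * γ ^ b) : b ≤ a := by
  by_contra! hab
  have hlim : Tendsto (fun γ : ℝ => d * γ ^ (b - a)) (𝓝[>] 0) (𝓝 0) := by
    have := (Real.continuousAt_rpow_const 0 (b - a) (.inr (sub_pos.mpr hab).le)).tendsto
    simpa [Real.zero_rpow (sub_pos.mpr hab).ne'] using
      (this.mono_left nhdsWithin_le_nhds).const_mul d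
  refine hc.not_ge (ge_of_tendsto hlim ?_)
  filter_upwards [h, self_mem_nhdsWithin] with γ hγ (hγ0 : 0 < γ)
  rwa [Real.rpow_sub hγ0, ← mul_div_assoc, le_div_iff₀ (Real.rpow_pos_of_pos hγ0 a)]

lemma tendsto_zero_and_exists_le_of_isBigO_rpow {f : ℝ → ℝ} {θ : ℝ} (hθ : 0 < θ)
    (hf : f =O[𝓝[>] 0] fun γ => γ ^ θ) :
    Tendsto f (𝓝[>] 0) (𝓝 0) ∧
    ∃ C : ℝ, ∃ o : ℝ → ℝ, Tendsto o (𝓝[>] 0) (𝓝 0) ∧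
      ∀ᶠ γ in 𝓝[>] (0 : ℝ), f γ ≤ C * γ ^ θ * Real.log (1 / γ) ^ ((3 : ℝ) / 2) + o γ := by
  have hpow : Tendsto (fun γ : ℝ => γ ^ θ) (𝓝[>] 0) (𝓝 0) := by
    simpa [Real.zero_rpow hθ.ne'] using
      (Real.continuousAt_rpow_const 0 θ (.inr hθ.le)).tendsto.mono_left nhdsWithin_le_nhds
  obtain ⟨C, hC, hle⟩ := hf.exists_nonneg
  refine ⟨hf.trans_tendsto hpow, C, 0, tendsto_const_nhds, ?_⟩
  filter_upwards [hle.bound, self_mem_nhdsWithin,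
    Real.tendsto_log_nhdsGT_zero.eventually_le_atBot (-1)] with γ hγ (hγ0 : 0 < γ) hlog
  rw [Real.norm_of_nonneg (Real.rpow_nonneg hγ0.le θ)] at hγ
  calc f γ ≤ C * γ ^ θ := (le_abs_self _).trans hγ
    _ ≤ C * γ ^ θ * Real.log (1 / γ) ^ ((3 : ℝ) / 2) := by
        refine le_mul_of_one_le_right (by positivity) (Real.one_le_rpow ?_ (by norm_num))
        rw [one_div, Real.log_inv]
        linarith
    _ = _ := (add_zero _).symm

theorem stmt17 {n : ℕ} (m : Fin (n + 1) → ℝ) (S : Matrix (Fin (n + 1)) (Fin (n + 1)) ℝ)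
    (hS : S.PosDef)
    (hA : ∀ j : Fin (n + 1), j ≠ 0 →
      Real.sqrt (S 0 0) < S 0 j / Real.sqrt (S 0 0 * S j j) * Real.sqrt (S j j))
    (a : Fin (n + 1) → ℝ) (ha : ∀ i, a i = S i 0 / S 0 0 - 1)
    (c : Fin (n + 1) → ℝ) (hc : ∀ i, c i = Real.exp (m i - S i 0 / S 0 0 * m 0))
    (i₀ : Fin (n + 1)) (hi₀ : i₀ ≠ 0)
    (hmax : ∀ᶠ γ in nhdsWithin (0 : ℝ) (Set.Ioi 0),
      ∀ i : Fin (n + 1), i ≠ 0 → c i * γ ^ (a i) ≤ c i₀ * γ ^ (a i₀)) :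
    let Λ : ℝ → Fin (n + 1) → ℝ := fun γ k =>
      if k = 0 then Real.log γ - m 0 else S k 0 / S 0 0 * (Real.log γ - m 0)
    let g : ℝ → (Fin (n + 1) → ℝ) → ℝ := fun γ y => mvnPdf (m + Λ γ) S y
    let L : ℝ → (Fin (n + 1) → ℝ) → ℝ := fun γ y => mvnPdf m S y / g γ y
    let T : ℝ → (Fin (n + 1) → ℝ) → ℝ := fun γ y =>
      Set.indicator {y : Fin (n + 1) → ℝ | ∑ i, Real.exp (y i) ≤ γ} (fun _ => (1 : ℝ)) y *
        L γ y
    let Z : ℝ → (Fin (n + 1) → ℝ) → ℝ := fun γ y =>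
      Set.indicator {y : Fin (n + 1) → ℝ | Real.exp (y 0) ≤ γ} (fun _ => (1 : ℝ)) y * L γ y
    let α : ℝ → ℝ := fun γ => ∫ y : Fin (n + 1) → ℝ, T γ y * g γ y
    let P : ℝ → ℝ := fun γ => ∫ y : Fin (n + 1) → ℝ, Z γ y * g γ y
    let varT' : ℝ → ℝ := fun γ =>
      ∫ y : Fin (n + 1) → ℝ, (T γ y - Z γ y + P γ - α γ) ^ 2 * g γ y
    Filter.Tendsto (fun γ : ℝ => varT' γ / α γ ^ 2) (nhdsWithin 0 (Set.Ioi 0)) (nhds 0) ∧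
    ∃ C₄ : ℝ, ∃ o : ℝ → ℝ, Filter.Tendsto o (nhdsWithin 0 (Set.Ioi 0)) (nhds 0) ∧
      ∀ᶠ γ in nhdsWithin (0 : ℝ) (Set.Ioi 0),
        varT' γ / α γ ^ 2 ≤
          C₄ * γ ^ (a i₀ / 2) * Real.log (1 / γ) ^ ((3 : ℝ) / 2) + o γ := by
  have hpos : 0 < a i₀ := (ha i₀).symm ▸ tailExponent_pos hS (hA i₀ hi₀)
  have hmin (i : Fin (n + 1)) (hi : i ≠ 0) : a i₀ ≤ a i :=
    le_of_eventually_const_mul_rpow_le (hc i ▸ Real.exp_pos _) (hmax.mono fun _ h => h i hi)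
  exact tendsto_zero_and_exists_le_of_isBigO_rpow (half_pos hpos)
    (isBigO_controlledEstimatorVariance_div_sq m 0 hS (half_pos hpos) fun i hi =>
      ((half_lt_self hpos).trans_le (hmin i hi)).trans_eq (ha i))
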